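/- Let T be the absolute model companion of a τ-theory S, and let ψ be a Π₂-sentence such that S + ψ is consistent. Then T + ψ is consistent. -/

import Mathlib

open FirstOrder FirstOrder.Language

universe u v w

namespace ModelCompanionship

variable {L : FirstOrder.Language.{u, v}}

/-- Existentially quantify away the last `k` free variables of a bounded formula. -/
def exsN : ∀ {n k : ℕ}, L.BoundedFormula Empty (n + k) → L.BoundedFormula Empty n
  | _, 0, φ => φ
  | _, _ + 1, φ => exsN φ.ex

/-- A sentence is universal if it is of the form `∀ x̄, ψ` with `ψ` quantifier-free. -/
def IsUniversalSentence (φ : L.Sentence) : Prop :=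
  ∃ (n : ℕ) (ψ : L.BoundedFormula Empty n), ψ.IsQF ∧ φ = ψ.alls

/-- A sentence is Π₂ if it is of the form `∀ x̄ ∃ ȳ, ψ` with `ψ` quantifier-free. -/
def IsPi2Sentence (φ : L.Sentence) : Prop :=
  ∃ (n k : ℕ) (ψ : L.BoundedFormula Empty (n + k)), ψ.IsQF ∧ φ = (exsN ψ).alls

/-- `T_∀`: the universal consequences of `T`. -/
def univFragment (T : L.Theory) : L.Theory :=
  {φ | IsUniversalSentence φ ∧ T ⊨ᵇ φ}

/-- Boolean combinations of universal sentences. -/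
inductive IsBCU : L.Sentence → Prop
  | of_univ {φ} : IsUniversalSentence φ → IsBCU φ
  | not {φ} : IsBCU φ → IsBCU φ.not
  | sup {φ ψ} : IsBCU φ → IsBCU ψ → IsBCU (φ ⊔ ψ)

/-- `T_{∀∨∃}`: the consequences of `T` that are boolean combinations of universal
sentences. -/
def bcuFragment (T : L.Theory) : L.Theory :=
  {φ | IsBCU φ ∧ T ⊨ᵇ φ}

/-- An embedding is Σ₁-elementary if existential formulas with parameters in the
domain transfer down from the codomain. -/
def IsSigma1Map {M : Type*} {N : Type*} [L.Structure M] [L.Structure N]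
    (f : M ↪[L] N) : Prop :=
  ∀ (m n : ℕ) (φ : L.BoundedFormula (Fin m) n), φ.IsQF →
    ∀ v : Fin m → M, (φ.exs).Realize ((f : M → N) ∘ v) → (φ.exs).Realize v

/-- An embedding is elementary: it preserves all first-order formulas with parameters. -/
def IsElementaryMap {M : Type*} {N : Type*} [L.Structure M] [L.Structure N]
    (f : M ↪[L] N) : Prop :=
  ∀ (m : ℕ) (φ : L.Formula (Fin m)) (v : Fin m → M),
    φ.Realize ((f : M → N) ∘ v) ↔ φ.Realize v

/-- `M` is `T`-existentially closed. -/
def IsEC (T : L.Theory) (M : Type w) [L.Structure M] : Prop :=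
  (∃ N : Theory.ModelType.{u, v, max u v w} T, Nonempty (M ↪[L] N)) ∧
    ∀ (P : Theory.ModelType.{u, v, max u v w} T) (f : M ↪[L] P), IsSigma1Map f

/-- A theory is model complete if every embedding between its models is elementary. -/
def IsModelComplete (T : L.Theory) : Prop :=
  ∀ (M N : Theory.ModelType.{u, v, max u v} T) (f : M ↪[L] N), IsElementaryMap f

/-- `R` is a model companion of `T`. -/
def IsModelCompanion (R T : L.Theory) : Prop :=
  IsModelComplete R ∧ univFragment R = univFragment T

/-- `R` is an absolute model companion (AMC) of `T`. -/
def IsAMC (R T : L.Theory) : Prop :=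
  IsModelComplete R ∧ bcuFragment R = bcuFragment T

/-!
Put `U = S ∪ {ψ}`. A boolean combination of universal sentences provable from `T` is provable from
`S`, hence from `U`, so by compactness some `N ⊨ T` satisfies every universal consequence of `U`.
Then `N` embeds into a model `P` of `U`. As `P` satisfies the universal consequences of `T`, it
embeds in turn into a model `Q` of `T`, and by model completeness `N → P → Q` is elementary. If
`ψ` is `∀ x̄ ∃ ȳ, θ`, then for a tuple `x̄` in `N` witnesses `ȳ` exist in `P`, hence in `Q`, hence
in `N`.
-/

section UniversalClosure

variable {α β : Type*} [DecidableEq α]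

theorem isQF_restrictFreeVar {n : ℕ} {φ : L.BoundedFormula α n} (h : φ.IsQF)
    (f : φ.freeVarFinset → β) : (φ.restrictFreeVar f).IsQF := by
  induction h with
  | falsum => exact .falsum
  | of_isAtomic h =>
    cases h with
    | equal => exact .of_isAtomic (.equal _ _)
    | rel => exact .of_isAtomic (.rel _ _)
  | imp _ _ ih₁ ih₂ => exact .imp (ih₁ _) (ih₂ _)

/-- The universal closure of a formula, the counterpart of `Formula.exClosure`. Only the variables
that occur are quantified, so `α` may be infinite. -/
noncomputable def allClosure (φ : L.Formula α) : L.Sentence :=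
  Formula.iAlls φ.freeVarFinset (Formula.relabel Sum.inr (φ.restrictFreeVar id))

theorem isUniversalSentence_allClosure {φ : L.Formula α} (hφ : φ.IsQF) :
    IsUniversalSentence (allClosure φ) :=
  ⟨_, _, ((isQF_restrictFreeVar hφ id).relabel _).relabel _, rfl⟩

theorem realize_allClosure {M : Type*} [L.Structure M] [Nonempty M] {φ : L.Formula α} :
    M ⊨ allClosure φ ↔ ∀ v : α → M, φ.Realize v := by
  have realize_restrict (v : α → M) :
      (φ.restrictFreeVar id).Realize (fun a : φ.freeVarFinset => v a) default ↔ φ.Realize v :=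
    BoundedFormula.realize_restrictFreeVar v fun _ => rfl
  simp only [Sentence.Realize, allClosure, Formula.realize_iAlls, Formula.realize_relabel]
  refine ⟨fun h v => (realize_restrict v).1 (h _), fun h i => ?_⟩
  obtain ⟨v, rfl⟩ : ∃ v : α → M, (fun a : φ.freeVarFinset => v a) = i :=
    ⟨Function.extend Subtype.val i fun _ => Classical.arbitrary M,
      Function.extend_comp Subtype.val_injective i _⟩
  exact (realize_restrict v).2 (h v)

end UniversalClosure

section FiniteDisjunction

variable {ι : Type*} [Finite ι]

theorem isQF_iSup {α : Type*} {n : ℕ} {f : ι → L.BoundedFormula α n} (hf : ∀ i, (f i).IsQF) :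
    (BoundedFormula.iSup f).IsQF :=
  List.foldrRecOn _ _ .falsum fun _ hχ _ hφ => by
    obtain ⟨i, -, rfl⟩ := List.mem_map.1 hφ
    exact (hf i).sup hχ

theorem isBCU_iSup {f : ι → L.Sentence} (hf : ∀ i, IsBCU (f i)) : IsBCU (Formula.iSup f) :=
  List.foldrRecOn _ _ (.of_univ ⟨0, ⊥, .falsum, rfl⟩) fun _ hχ _ hφ => by
    obtain ⟨i, -, rfl⟩ := List.mem_map.1 hφ
    exact .sup (hf i) hχ

theorem exists_finset_models_iSup_not {T U : L.Theory} (h : ¬ (T ∪ U).IsSatisfiable) :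
    ∃ F : Finset L.Sentence, (F : L.Theory) ⊆ U ∧ T ⊨ᵇ (Formula.iSup fun σ : F => σ.1.not) := by
  classical
  obtain ⟨F, hF, hF_unsat⟩ : ∃ F : Finset L.Sentence,
      (F : L.Theory) ⊆ T ∪ U ∧ ¬ Theory.IsSatisfiable (F : L.Theory) := by
    rw [Theory.isSatisfiable_iff_isFinitelySatisfiable] at h
    simpa only [Theory.IsFinitelySatisfiable, not_forall, exists_prop] using h
  refine ⟨{σ ∈ F | σ ∈ U}, fun σ hσ => (Finset.mem_filter.1 hσ).2,
    Theory.models_sentence_iff.2 fun N => ?_⟩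
  by_contra hN
  have hNF : N ⊨ (F : L.Theory) := by
    refine ⟨fun σ hσ => (hF hσ).elim (N.is_model.realize_of_mem σ) fun hσU => ?_⟩
    by_contra hNσ
    exact hN (Formula.realize_iSup.2 ⟨⟨σ, Finset.mem_filter.2 ⟨hσ, hσU⟩⟩, hNσ⟩)
  exact hF_unsat (Theory.Model.isSatisfiable N)

end FiniteDisjunction

section Fragments

variable {T U : L.Theory}

theorem bcuFragment_mono (h : T ⊆ U) : bcuFragment T ⊆ bcuFragment U :=
  fun _ hφ => ⟨hφ.1, Theory.models_of_models_theory
    (fun _ hσ => Theory.models_sentence_of_mem (h hσ)) hφ.2⟩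

theorem univFragment_subset_of_bcuFragment_subset (h : bcuFragment T ⊆ bcuFragment U) :
    univFragment T ⊆ univFragment U :=
  fun _ hφ => ⟨hφ.1, (h ⟨.of_univ hφ.1, hφ.2⟩).2⟩

theorem isSatisfiable_union_univFragment (h : bcuFragment T ⊆ bcuFragment U)
    (hU : U.IsSatisfiable) : (T ∪ univFragment U).IsSatisfiable := by
  by_contra hunsat
  obtain ⟨F, hFU, hTF⟩ := exists_finset_models_iSup_not hunsat
  have hUF : U ⊨ᵇ (Formula.iSup fun σ : F => σ.1.not) :=
    (h ⟨isBCU_iSup fun σ => .not (.of_univ (hFU σ.2).1), hTF⟩).2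
  obtain ⟨M⟩ := hU
  obtain ⟨σ, hσ⟩ := Formula.realize_iSup.1 (hUF.realize_sentence M)
  exact hσ ((hFU σ.2).2.realize_sentence M)

theorem realize_of_model_univFragment {A : Type*} [L.Structure A] [Nonempty A]
    (hA : A ⊨ univFragment T) {α : Type*} {φ : L.Formula α} (hφ : φ.IsQF) (hT : T ⊨ᵇ φ)
    (v : α → A) : φ.Realize v := by
  classical
  have hT_closure : T ⊨ᵇ allClosure φ :=
    Theory.models_sentence_iff.2 fun N => realize_allClosure.2 fun _ => hT.realize_formula N
  exact realize_allClosure.1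
    (hA.realize_of_mem _ ⟨isUniversalSentence_allClosure hφ, hT_closure⟩) v

end Fragments

section Diagram

variable (L) in
/-- The quantifier-free diagram of a structure: the quantifier-free sentences with parameters in
`A` that hold in `A`. -/
def qfDiagram (A : Type w) [L.Structure A] : L[[A]].Theory :=
  Formula.equivSentence '' {φ : L.Formula A | φ.IsQF ∧ φ.Realize id}

variable {A : Type w} [L.Structure A]

theorem realize_con_iff_of_model_qfDiagram {B : Type*} [L.Structure B] [L[[A]].Structure B]
    [(L.lhomWithConstants A).IsExpansionOn B] (hB : B ⊨ qfDiagram L A) {φ : L.Formula A}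
    (hφ : φ.IsQF) : (φ.Realize fun a => (L.con a : B)) ↔ φ.Realize (id : A → A) := by
  have realize_con {χ : L.Formula A} (hχ : χ.IsQF) (h : χ.Realize (id : A → A)) :
      χ.Realize fun a => (L.con a : B) :=
    (Formula.realize_equivSentence B χ).1 (hB.realize_of_mem _ ⟨χ, ⟨hχ, h⟩, rfl⟩)
  refine ⟨fun h => ?_, realize_con hφ⟩
  by_contra hn
  exact realize_con hφ.not hn h

/-- The canonical embedding of a structure into any model of its quantifier-free diagram, the
counterpart of `ElementaryEmbedding.ofModelsElementaryDiagram`. -/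
def embeddingOfModelQFDiagram {B : Type*} [L.Structure B] [L[[A]].Structure B]
    [(L.lhomWithConstants A).IsExpansionOn B] (hB : B ⊨ qfDiagram L A) : A ↪[L] B where
  toFun a := (L.con a : B)
  inj' a b hab := by
    simpa using (realize_con_iff_of_model_qfDiagram hB
      (φ := (Term.var a).equal (Term.var b)) (BoundedFormula.IsAtomic.equal _ _).isQF).1
      (by simpa using hab)
  map_fun' f x := by
    simpa [eq_comm, Function.comp_def] using realize_con_iff_of_model_qfDiagram hB
      (φ := (Term.func f fun i => Term.var (x i)).equal (Term.var (Structure.funMap f x)))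
      (BoundedFormula.IsAtomic.equal _ _).isQF
  map_rel' r x := by
    simpa [Function.comp_def] using realize_con_iff_of_model_qfDiagram hB
      (φ := r.formula fun i => Term.var (x i)) (BoundedFormula.IsAtomic.rel _ _).isQF

theorem isSatisfiable_onTheory_union_qfDiagram [Nonempty A] {T : L.Theory}
    (hA : A ⊨ univFragment T) :
    ((L.lhomWithConstants A).onTheory T ∪ qfDiagram L A).IsSatisfiable := by
  by_contra hunsat
  obtain ⟨F, hFA, hTF⟩ := exists_finset_models_iSup_not hunsat
  let φ : F → L.Formula A := fun σ => Formula.equivSentence.symm σ.1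
  have hφ (σ : F) : (φ σ).IsQF ∧ (φ σ).Realize (id : A → A) := by
    obtain ⟨χ, hχ, hχσ⟩ := hFA σ.2
    simpa [φ, ← hχσ] using hχ
  have hT : T ⊨ᵇ Formula.iSup fun σ => (φ σ).not := by
    refine Theory.models_formula_iff_onTheory_models_equivSentence.2
      (Theory.models_sentence_iff.2 fun N => ?_)
    let : L.Structure N := (L.lhomWithConstants A).reduct N
    have : (L.lhomWithConstants A).IsExpansionOn N := LHom.isExpansionOn_reduct _ _
    obtain ⟨σ, hσ⟩ := Formula.realize_iSup.1 (hTF.realize_sentence N)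
    exact (Formula.realize_equivSentence N _).2 (Formula.realize_iSup.2
      ⟨σ, fun h => hσ ((Formula.realize_equivSentence_symm_con N σ.1).1 h)⟩)
  obtain ⟨σ, hσ⟩ := Formula.realize_iSup.1
    (realize_of_model_univFragment hA (isQF_iSup fun σ => (hφ σ).1.not) hT id)
  exact hσ (hφ σ).2

theorem exists_embedding_of_model_univFragment [Nonempty A] {T : L.Theory}
    (hA : A ⊨ univFragment T) :
    ∃ B : Theory.ModelType.{u, v, max u v w} T, Nonempty (A ↪[L] B) := by
  obtain ⟨B⟩ := isSatisfiable_onTheory_union_qfDiagram hA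
  let : L.Structure B := (L.lhomWithConstants A).reduct B
  have : (L.lhomWithConstants A).IsExpansionOn B := LHom.isExpansionOn_reduct _ _
  have hBT : B ⊨ T :=
    (LHom.onTheory_model (L.lhomWithConstants A) T).1 (B.is_model.mono Set.subset_union_left)
  have hBA : B ⊨ qfDiagram L A := B.is_model.mono Set.subset_union_right
  exact ⟨⟨B⟩, ⟨embeddingOfModelQFDiagram hBA⟩⟩

end Diagram

section ForallExists

theorem isExistential_exsN {k n : ℕ} {φ : L.BoundedFormula Empty (n + k)}
    (hφ : φ.IsExistential) : (exsN φ).IsExistential := by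
  induction k with
  | zero => exact hφ
  | succ k ih => exact ih hφ.ex

theorem realize_alls_of_isElementaryMap_comp {N P Q : Type*} [L.Structure N] [L.Structure P]
    [L.Structure Q] {f : N ↪[L] P} {g : P ↪[L] Q} (hgf : IsElementaryMap (g.comp f)) {n : ℕ}
    {φ : L.BoundedFormula Empty n} (hφ : φ.IsExistential) (hP : P ⊨ φ.alls) : N ⊨ φ.alls := by
  rw [Sentence.Realize, BoundedFormula.realize_alls] at hP ⊢
  intro x
  have hQ : φ.Realize (g ∘ default) (g ∘ f ∘ x) := hφ.realize_embedding g (hP (f ∘ x))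
  let e : N ↪ₑ[L] Q := ⟨g.comp f, hgf⟩
  rw [Subsingleton.elim (g ∘ default) (e ∘ default)] at hQ
  exact (e.map_boundedFormula φ default x).1 hQ

theorem IsModelComplete.realize_of_isPi2Sentence {T U : L.Theory} (hT : IsModelComplete T)
    (hTU : univFragment T ⊆ univFragment U) {N : Type max u v} [L.Structure N] [Nonempty N]
    (hNT : N ⊨ T) (hNU : N ⊨ univFragment U) {ψ : L.Sentence} (hψ : IsPi2Sentence ψ)
    (hUψ : U ⊨ᵇ ψ) : N ⊨ ψ := by
  obtain ⟨n, k, θ, hθ, rfl⟩ := hψ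
  obtain ⟨P, ⟨f⟩⟩ := exists_embedding_of_model_univFragment hNU
  have hPT : P ⊨ univFragment T := ⟨fun φ hφ => (hTU hφ).2.realize_sentence P⟩
  obtain ⟨Q, ⟨g⟩⟩ := exists_embedding_of_model_univFragment hPT
  have hgf : IsElementaryMap (g.comp f) := hT (.of T N) Q (g.comp f)
  exact realize_alls_of_isElementaryMap_comp hgf (isExistential_exsN hθ.isExistential)
    (hUψ.realize_sentence P)

end ForallExists

theorem amc_pi2_consistent_general {T S Ψ : L.Theory} (hT : IsModelComplete T)
    (hTS : bcuFragment T ⊆ bcuFragment S) (hΨ : ∀ ψ ∈ Ψ, IsPi2Sentence ψ)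
    (hcon : (S ∪ Ψ).IsSatisfiable) : (T ∪ Ψ).IsSatisfiable := by
  have hTSΨ : bcuFragment T ⊆ bcuFragment (S ∪ Ψ) :=
    hTS.trans (bcuFragment_mono Set.subset_union_left)
  obtain ⟨N⟩ := isSatisfiable_union_univFragment hTSΨ hcon
  have hNT : N ⊨ T := N.is_model.mono Set.subset_union_left
  have hNS : N ⊨ univFragment (S ∪ Ψ) := N.is_model.mono Set.subset_union_right
  have hNΨ : N ⊨ Ψ := ⟨fun ψ hψ =>
    hT.realize_of_isPi2Sentence (univFragment_subset_of_bcuFragment_subset hTSΨ) hNT hNS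
      (hΨ ψ hψ) (Theory.models_sentence_of_mem (Or.inr hψ))⟩
  have : N ⊨ T ∪ Ψ := hNT.union hNΨ
  exact Theory.Model.isSatisfiable N

/-- If `T` is the absolute model companion of `S` and `ψ` is a Π₂-sentence consistent
with `S`, then `ψ` is consistent with `T`. -/
theorem amc_pi2_consistent (T S : L.Theory) (h : IsAMC T S)
    (ψ : L.Sentence) (hψ : IsPi2Sentence ψ)
    (hcon : Theory.IsSatisfiable (S ∪ {ψ})) :
    Theory.IsSatisfiable (T ∪ {ψ}) :=
  amc_pi2_consistent_general h.1 h.2.subset (fun _ hφ => hφ ▸ hψ) hcon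

end ModelCompanionship
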